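/- arXiv:2009.08008 — 7 statements merged into one kernel-verified Lean document; each statement's English description precedes it below -/
import Mathlib

section
/- Nonlocal Gauss theorem (tensor version): for every measurable matrix-valued two-point function v : ℝⁿ × ℝⁿ → ℝ^{n×n} such that (x,x') ↦ (v(x,x') + v(x',x))·α(x,x') is integrable on (Ω ∪ Ω_τ) × (Ω ∪ Ω_τ), one has ∫_Ω D(v)(x) dx = ∫_{Ω_τ} N(v)(x) dx, an identity of vectors in ℝⁿ. -/
open MeasureTheory Matrix

/-- Nonlocal divergence operator `D(v)(x) = ∫_{ℝⁿ} (v(x,x') + v(x',x))·α(x,x') dx'`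
for matrix-valued two-point functions (contraction of the last index with `α`). -/
noncomputable def Dop {n : ℕ} (α : (Fin n → ℝ) → (Fin n → ℝ) → (Fin n → ℝ))
    (v : (Fin n → ℝ) → (Fin n → ℝ) → Matrix (Fin n) (Fin n) ℝ)
    (x : Fin n → ℝ) : Fin n → ℝ :=
  ∫ x', (v x x' + v x' x).mulVec (α x x')

/-- Nonlocal interaction operator
`N(v)(x) = −∫_{Ω∪Ω_τ} (v(x,x') + v(x',x))·α(x,x') dx'`. -/
noncomputable def Nop {n : ℕ} (Ω Ωτ : Set (Fin n → ℝ))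
    (α : (Fin n → ℝ) → (Fin n → ℝ) → (Fin n → ℝ))
    (v : (Fin n → ℝ) → (Fin n → ℝ) → Matrix (Fin n) (Fin n) ℝ)
    (x : Fin n → ℝ) : Fin n → ℝ :=
  -∫ x' in Ω ∪ Ωτ, (v x x' + v x' x).mulVec (α x x')

/-- **Nonlocal Gauss theorem (tensor version).** -/
theorem nonlocal_gauss_theorem {n : ℕ} (hn : 1 ≤ n)
    (Ω Ωτ : Set (Fin n → ℝ)) (hΩ : MeasurableSet Ω) (hΩτ : MeasurableSet Ωτ)
    (hdisj : Disjoint Ω Ωτ)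
    (α : (Fin n → ℝ) → (Fin n → ℝ) → (Fin n → ℝ))
    (hαmeas : Measurable fun p : (Fin n → ℝ) × (Fin n → ℝ) => α p.1 p.2)
    (hαanti : ∀ x x', α x x' = -α x' x)
    (hαsupp : ∀ x x', x ∈ Ω ∪ Ωτ → x' ∉ Ω ∪ Ωτ → α x x' = 0)
    (v : (Fin n → ℝ) → (Fin n → ℝ) → Matrix (Fin n) (Fin n) ℝ)
    (hvmeas : ∀ i j, Measurable fun p : (Fin n → ℝ) × (Fin n → ℝ) => v p.1 p.2 i j)
    (hint : IntegrableOn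
      (fun p : (Fin n → ℝ) × (Fin n → ℝ) =>
        (v p.1 p.2 + v p.2 p.1).mulVec (α p.1 p.2))
      ((Ω ∪ Ωτ) ×ˢ (Ω ∪ Ωτ))) :
    ∫ x in Ω, Dop α v x = ∫ x in Ωτ, Nop Ω Ωτ α v x := by
  set f : (Fin n → ℝ) → (Fin n → ℝ) → (Fin n → ℝ) :=
    fun x x' => (v x x' + v x' x).mulVec (α x x') with hf
  set S := Ω ∪ Ωτ with hS
  have hfanti : ∀ x x', f x x' = -f x' x := by
    intro x x'
    simp only [hf]
    rw [hαanti x x', Matrix.mulVec_neg, add_comm]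
  have hint' : Integrable (fun p : (Fin n → ℝ) × (Fin n → ℝ) => f p.1 p.2)
      ((volume.restrict S).prod (volume.restrict S)) := by
    rw [Measure.prod_restrict]
    exact hint
  have hg : IntegrableOn (fun x => ∫ x' in S, f x x') S := hint'.integral_prod_left
  have hD : ∫ x in Ω, Dop α v x = ∫ x in Ω, ∫ x' in S, f x x' := by
    refine setIntegral_congr_fun hΩ fun x hx => ?_
    refine (setIntegral_eq_integral_of_forall_compl_eq_zero fun x' hx' => ?_).symm
    change (v x x' + v x' x).mulVec (α x x') = 0
    rw [hαsupp x x' (Or.inl hx) hx', Matrix.mulVec_zero]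
  have hN : ∫ x in Ωτ, Nop Ω Ωτ α v x = -∫ x in Ωτ, ∫ x' in S, f x x' :=
    integral_neg _
  have hzero : ∫ x in S, ∫ x' in S, f x x' = 0 := by
    have h1 : ∫ x in S, ∫ x' in S, f x x' = ∫ x' in S, ∫ x in S, f x x' :=
      integral_integral_swap hint'
    have h2 : ∫ x' in S, ∫ x in S, f x x' = -∫ x in S, ∫ x' in S, f x x' := by
      rw [← integral_neg]
      refine integral_congr_ae (Filter.Eventually.of_forall fun y => ?_)
      simp only
      rw [← integral_neg]
      exact integral_congr_ae (Filter.Eventually.of_forall fun x => hfanti x y)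
    exact self_eq_neg.mp (h1.trans h2)
  rw [hD, hN]
  rw [hS, setIntegral_union hdisj hΩτ (hg.mono_set Set.subset_union_left)
    (hg.mono_set Set.subset_union_right)] at hzero
  exact eq_neg_of_add_eq_zero_left hzero
end

section
/- Product rule for the nonlocal divergence operator: let χ : ℝⁿ → ℝⁿ and Ψ : ℝⁿ × ℝⁿ → ℝ^{n×n} be measurable, and let κ be the vector-valued two-point function with components κ_j(x,x') = Σ_i χ_i(x) Ψ_{ij}(x,x'). Then for every x ∈ Ω ∪ Ω_τ, D(κ)(x) = χ(x)·D(Ψ)(x) + ∫_{Ω∪Ω_τ} Σ_{i,j} (χ_i(x') − χ_i(x)) Ψ_{ij}(x',x) α_j(x,x') dx'. -/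
open MeasureTheory Matrix

/-- Nonlocal divergence operator
`D(v)(x) = ∫_{ℝⁿ} (v(x,x') + v(x',x))·α(x,x') dx'` for vector-valued two-point
functions (contraction of the last = only index with `α`). -/
noncomputable def DopV {n : ℕ} (α : (Fin n → ℝ) → (Fin n → ℝ) → (Fin n → ℝ))
    (v : (Fin n → ℝ) → (Fin n → ℝ) → (Fin n → ℝ))
    (x : Fin n → ℝ) : ℝ :=
  ∫ x', (v x x' + v x' x) ⬝ᵥ α x x'

/-- **Product rule for the nonlocal divergence operator**:
for `κ_j(x,x') = Σ_i χ_i(x) Ψ_{ij}(x,x')` and every `x ∈ Ω ∪ Ω_τ`,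
`D(κ)(x) = χ(x)·D(Ψ)(x) + ∫_{Ω∪Ω_τ} Σ_{i,j} (χ_i(x') − χ_i(x)) Ψ_{ij}(x',x) α_j(x,x') dx'`. -/
theorem nonlocal_div_product_rule {n : ℕ} (hn : 1 ≤ n)
    (Ω Ωτ : Set (Fin n → ℝ)) (hΩ : MeasurableSet Ω) (hΩτ : MeasurableSet Ωτ)
    (hdisj : Disjoint Ω Ωτ)
    (α : (Fin n → ℝ) → (Fin n → ℝ) → (Fin n → ℝ))
    (hαmeas : Measurable fun p : (Fin n → ℝ) × (Fin n → ℝ) => α p.1 p.2)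
    (hαanti : ∀ x x', α x x' = -α x' x)
    (hαsupp : ∀ x x', x ∈ Ω ∪ Ωτ → x' ∉ Ω ∪ Ωτ → α x x' = 0)
    (χ : (Fin n → ℝ) → (Fin n → ℝ)) (hχ : Measurable χ)
    (Ψ : (Fin n → ℝ) → (Fin n → ℝ) → Matrix (Fin n) (Fin n) ℝ)
    (hΨ : ∀ i j, Measurable fun p : (Fin n → ℝ) × (Fin n → ℝ) => Ψ p.1 p.2 i j)
    (hint1 : ∀ x, Integrable fun x' =>
      (Matrix.vecMul (χ x) (Ψ x x') + Matrix.vecMul (χ x') (Ψ x' x)) ⬝ᵥ α x x')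
    (hint2 : ∀ x, Integrable fun x' => (Ψ x x' + Ψ x' x).mulVec (α x x'))
    (hint3 : ∀ x, IntegrableOn
      (fun x' => ∑ i, ∑ j, (χ x' i - χ x i) * Ψ x' x i j * α x x' j) (Ω ∪ Ωτ)) :
    ∀ x ∈ Ω ∪ Ωτ,
      DopV α (fun y y' => Matrix.vecMul (χ y) (Ψ y y')) x
        = χ x ⬝ᵥ Dop α Ψ x
          + ∫ x' in Ω ∪ Ωτ, ∑ i, ∑ j, (χ x' i - χ x i) * Ψ x' x i j * α x x' j := by
  intro x hx
  have hcomp : ∀ i, Integrable fun x' => ((Ψ x x' + Ψ x' x).mulVec (α x x')) i :=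
    fun i => (hint2 x).eval i
  have hG : Integrable fun x' => χ x ⬝ᵥ (Ψ x x' + Ψ x' x).mulVec (α x x') := by
    unfold dotProduct
    exact integrable_finsetSum _ (fun i _ => (hcomp i).const_mul _)
  have h1 : χ x ⬝ᵥ Dop α Ψ x = ∫ x', χ x ⬝ᵥ (Ψ x x' + Ψ x' x).mulVec (α x x') := by
    unfold dotProduct Dop
    rw [integral_finsetSum _ (fun i _ => (hcomp i).const_mul _)]
    refine Finset.sum_congr rfl fun i _ => ?_
    rw [integral_const_mul, eval_integral hcomp]
  rw [setIntegral_eq_integral_of_forall_compl_eq_zero, h1, ← sub_eq_iff_eq_add']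
  · unfold DopV
    rw [← integral_sub (hint1 x) hG]
    congr 1
    funext x'
    have e : χ x ⬝ᵥ (Ψ x x' + Ψ x' x).mulVec (α x x')
        = (χ x ᵥ* Ψ x x' + χ x ᵥ* Ψ x' x) ⬝ᵥ α x x' := by
      rw [dotProduct_mulVec, vecMul_add]
    have e2 : ∑ i, ∑ j, (χ x' i - χ x i) * Ψ x' x i j * α x x' j
        = ((χ x' - χ x) ᵥ* Ψ x' x) ⬝ᵥ α x x' := by
      rw [← dotProduct_mulVec]
      simp only [dotProduct, mulVec, Finset.mul_sum, Pi.sub_apply, mul_assoc]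
    rw [e, e2, sub_vecMul]
    simp only [add_dotProduct, sub_dotProduct]
    ring
  · intro x' hx'
    simp [hαsupp x x' hx hx']
end

section
/- Product rule for the nonlocal interaction operator: let χ : ℝⁿ → ℝⁿ and Ψ : ℝⁿ × ℝⁿ → ℝ^{n×n} be measurable, and let κ be the vector-valued two-point function with components κ_j(x,x') = Σ_i χ_i(x) Ψ_{ij}(x,x'). Then for every x ∈ ℝⁿ, N(κ)(x) = χ(x)·N(Ψ)(x) − ∫_{Ω∪Ω_τ} Σ_{i,j} (χ_i(x') − χ_i(x)) Ψ_{ij}(x',x) α_j(x,x') dx'. -/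
open MeasureTheory Matrix

/-- Nonlocal interaction operator
`N(v)(x) = −∫_{Ω∪Ω_τ} (v(x,x') + v(x',x))·α(x,x') dx'` for vector-valued two-point
functions (contraction of the last = only index with `α`). -/
noncomputable def NopV {n : ℕ} (Ω Ωτ : Set (Fin n → ℝ))
    (α : (Fin n → ℝ) → (Fin n → ℝ) → (Fin n → ℝ))
    (v : (Fin n → ℝ) → (Fin n → ℝ) → (Fin n → ℝ))
    (x : Fin n → ℝ) : ℝ :=
  -∫ x' in Ω ∪ Ωτ, (v x x' + v x' x) ⬝ᵥ α x x'

/-- **Product rule for the nonlocal interaction operator**: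
for `κ_j(x,x') = Σ_i χ_i(x) Ψ_{ij}(x,x')` and every `x ∈ ℝⁿ`,
`N(κ)(x) = χ(x)·N(Ψ)(x) − ∫_{Ω∪Ω_τ} Σ_{i,j} (χ_i(x') − χ_i(x)) Ψ_{ij}(x',x) α_j(x,x') dx'`. -/
theorem nonlocal_interaction_product_rule {n : ℕ} (hn : 1 ≤ n)
    (Ω Ωτ : Set (Fin n → ℝ)) (hΩ : MeasurableSet Ω) (hΩτ : MeasurableSet Ωτ)
    (hdisj : Disjoint Ω Ωτ)
    (α : (Fin n → ℝ) → (Fin n → ℝ) → (Fin n → ℝ))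
    (hαmeas : Measurable fun p : (Fin n → ℝ) × (Fin n → ℝ) => α p.1 p.2)
    (hαanti : ∀ x x', α x x' = -α x' x)
    (hαsupp : ∀ x x', x ∈ Ω ∪ Ωτ → x' ∉ Ω ∪ Ωτ → α x x' = 0)
    (χ : (Fin n → ℝ) → (Fin n → ℝ)) (hχ : Measurable χ)
    (Ψ : (Fin n → ℝ) → (Fin n → ℝ) → Matrix (Fin n) (Fin n) ℝ)
    (hΨ : ∀ i j, Measurable fun p : (Fin n → ℝ) × (Fin n → ℝ) => Ψ p.1 p.2 i j)
    (hint1 : ∀ x, IntegrableOn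
      (fun x' => (Matrix.vecMul (χ x) (Ψ x x') + Matrix.vecMul (χ x') (Ψ x' x)) ⬝ᵥ α x x')
      (Ω ∪ Ωτ))
    (hint2 : ∀ x, IntegrableOn
      (fun x' => (Ψ x x' + Ψ x' x).mulVec (α x x')) (Ω ∪ Ωτ))
    (hint3 : ∀ x, IntegrableOn
      (fun x' => ∑ i, ∑ j, (χ x' i - χ x i) * Ψ x' x i j * α x x' j) (Ω ∪ Ωτ)) :
    ∀ x : Fin n → ℝ,
      NopV Ω Ωτ α (fun y y' => Matrix.vecMul (χ y) (Ψ y y')) x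
        = χ x ⬝ᵥ Nop Ω Ωτ α Ψ x
          - ∫ x' in Ω ∪ Ωτ, ∑ i, ∑ j, (χ x' i - χ x i) * Ψ x' x i j * α x x' j := by
  intro x
  have hdot : χ x ⬝ᵥ (∫ x' in Ω ∪ Ωτ, (Ψ x x' + Ψ x' x).mulVec (α x x'))
      = ∫ x' in Ω ∪ Ωτ, χ x ⬝ᵥ (Ψ x x' + Ψ x' x).mulVec (α x x') := by
    simp only [dotProduct]
    rw [integral_finsetSum]
    · refine Finset.sum_congr rfl fun i _ => ?_
      rw [integral_const_mul, eval_integral (fun i => (hint2 x).eval i)]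
    · intro i _
      exact ((hint2 x).eval i).const_mul _
  have hI : Integrable (fun x' => χ x ⬝ᵥ (Ψ x x' + Ψ x' x).mulVec (α x x'))
      (volume.restrict (Ω ∪ Ωτ)) := by
    simp only [dotProduct]
    exact integrable_finsetSum _ fun i _ => ((hint2 x).eval i).const_mul _
  unfold NopV Nop
  rw [dotProduct_neg, hdot, ← neg_add', ← integral_add hI (hint3 x)]
  congr 2
  funext x'
  have h3 : ∑ i, ∑ j, (χ x' i - χ x i) * Ψ x' x i j * α x x' j
      = (χ x' - χ x) ⬝ᵥ (Ψ x' x).mulVec (α x x') := by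
    simp only [dotProduct, mulVec, Finset.mul_sum, Pi.sub_apply, mul_assoc]
  rw [h3, add_dotProduct, ← dotProduct_mulVec, ← dotProduct_mulVec, add_mulVec,
    dotProduct_add, sub_dotProduct]
  ring
end

section
/- Truncated-convolution integration-by-parts lemma: let t₀ ≤ t be real numbers and f, g : ℝ → ℝ twice continuously differentiable. Then ∫_{t₀}^{t} f(τ) g''(t − τ + t₀) dτ − ∫_{t₀}^{t} g(τ) f''(t − τ + t₀) dτ = f(t₀) g'(t) + f'(t₀) g(t) − f(t) g'(t₀) − f'(t) g(t₀). -/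
open intervalIntegral

/-- **Truncated-convolution integration-by-parts lemma**: for `t₀ ≤ t` and twice
continuously differentiable `f, g : ℝ → ℝ`,
`∫_{t₀}^{t} f(τ) g''(t − τ + t₀) dτ − ∫_{t₀}^{t} g(τ) f''(t − τ + t₀) dτ
  = f(t₀) g'(t) + f'(t₀) g(t) − f(t) g'(t₀) − f'(t) g(t₀)`. -/
theorem truncated_convolution_integration_by_parts
    (t₀ t : ℝ) (h : t₀ ≤ t) (f g : ℝ → ℝ)
    (hf : ContDiff ℝ 2 f) (hg : ContDiff ℝ 2 g) :
    (∫ τ in t₀..t, f τ * deriv (deriv g) (t - τ + t₀))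
      - (∫ τ in t₀..t, g τ * deriv (deriv f) (t - τ + t₀))
      = f t₀ * deriv g t + deriv f t₀ * g t - f t * deriv g t₀ - deriv f t * g t₀ := by
  have key : ∀ u : ℝ → ℝ, ContDiff ℝ 2 u → (∀ x, HasDerivAt u (deriv u x) x) ∧
      (∀ x, HasDerivAt (deriv u) (deriv (deriv u) x) x) ∧ Continuous (deriv (deriv u)) := by
    intro u hu
    have h1 : ContDiff ℝ 1 (deriv u) := by
      have h2 : ContDiff ℝ (1 + 1) u := by
        rw [one_add_one_eq_two]
        exact hu
      exact (contDiff_succ_iff_deriv.1 h2).2.2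
    exact ⟨fun x => (hu.differentiable (by norm_num) x).hasDerivAt,
      fun x => (h1.differentiable (by norm_num) x).hasDerivAt,
      h1.continuous_deriv le_rfl⟩
  obtain ⟨f1, f2, f3⟩ := key f hf
  obtain ⟨g1, g2, g3⟩ := key g hg
  have cf := hf.continuous
  have cg := hg.continuous
  have hsub : (∫ τ in t₀..t, g τ * deriv (deriv f) (t - τ + t₀))
      = ∫ τ in t₀..t, g (t + t₀ - τ) * deriv (deriv f) τ := by
    have := intervalIntegral.integral_comp_sub_left (a := t₀) (b := t)
      (fun τ => g τ * deriv (deriv f) (t - τ + t₀)) (t + t₀)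
    simp only [add_sub_cancel_left, add_sub_cancel_right] at this
    rw [← this]
    congr 1
    ext τ
    congr 2
    ring
  rw [hsub, ← intervalIntegral.integral_sub
    ((by fun_prop : Continuous _).intervalIntegrable _ _)
    ((by fun_prop : Continuous _).intervalIntegrable _ _)]
  have hs : ∀ τ : ℝ, HasDerivAt (fun τ : ℝ => t + t₀ - τ) (-1) τ := fun τ => by
    simpa using (hasDerivAt_id τ).const_sub (t + t₀)
  rw [intervalIntegral.integral_eq_sub_of_hasDerivAt
    (f := fun τ => -(f τ * deriv g (t + t₀ - τ)) - deriv f τ * g (t + t₀ - τ))]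
  · simp only [add_sub_cancel_left, add_sub_cancel_right]
    ring
  · intro τ _
    have a := (f1 τ).mul ((g2 (t + t₀ - τ)).comp τ (hs τ))
    have b := (f2 τ).mul ((g1 (t + t₀ - τ)).comp τ (hs τ))
    refine (a.neg.sub b).congr_deriv ?_
    have e : t - τ + t₀ = t + t₀ - τ := by ring
    simp only [Function.comp, e]
    ring
  · exact (by fun_prop : Continuous _).intervalIntegrable _ _
end

section
/- Laplace inversion via the Fourier cosine transform: let a ∈ ℝ and let f : ℝ → ℝ satisfy f(t) = 0 for t < 0, f continuous on (0,∞), t ↦ e^{−at} f(t) integrable on [0,∞), and ω ↦ Re F(a + iω) integrable on [0,∞), where F(s) = ∫₀^∞ f(t) e^{−st} dt. Then for every t > 0, f(t) = (2 e^{at}/π) ∫₀^∞ Re F(a + iω) cos(ωt) dω. -/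
open MeasureTheory

open FourierTransform in
/-- **Laplace inversion via the Fourier cosine transform**: under the stated
integrability and continuity assumptions, for every `t > 0`,
`f(t) = (2 e^{at}/π) ∫₀^∞ Re F(a + iω) cos(ωt) dω`, where
`F(s) = ∫₀^∞ f(t) e^{−st} dt` is the Laplace transform of `f`. -/
theorem laplace_inversion_fourier_cosine (a : ℝ) (f : ℝ → ℝ)
    (hzero : ∀ t < (0 : ℝ), f t = 0)
    (hcont : ContinuousOn f (Set.Ioi 0))
    (hint : IntegrableOn (fun t => Real.exp (-a * t) * f t) (Set.Ici 0))
    (hint2 : IntegrableOn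
      (fun ω : ℝ => (∫ u in Set.Ici (0 : ℝ),
        (f u : ℂ) * Complex.exp (-((a : ℂ) + (ω : ℂ) * Complex.I) * (u : ℂ))).re)
      (Set.Ici 0)) :
    ∀ t > (0 : ℝ),
      f t = (2 * Real.exp (a * t) / Real.pi) *
        ∫ ω in Set.Ici (0 : ℝ),
          (∫ u in Set.Ici (0 : ℝ),
            (f u : ℂ) * Complex.exp (-((a : ℂ) + (ω : ℂ) * Complex.I) * (u : ℂ))).re
            * Real.cos (ω * t) := by
  intro t ht
  set L : ℝ → ℂ := fun ω => ∫ u in Set.Ici (0 : ℝ),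
        (f u : ℂ) * Complex.exp (-((a : ℂ) + (ω : ℂ) * Complex.I) * (u : ℂ)) with hL
  change IntegrableOn (fun ω => (L ω).re) _ at hint2
  change f t = _ * ∫ ω in Set.Ici (0 : ℝ), (L ω).re * Real.cos (ω * t)
  have hLneg : ∀ ω, L (-ω) = (starRingEnd ℂ) (L ω) := by
    intro ω
    simp only [hL]
    rw [← integral_conj]
    congr 1
    ext u
    rw [map_mul, Complex.conj_ofReal, ← Complex.exp_conj]
    simp
  have hReven : ∀ ω, (L (-ω)).re = (L ω).re := by
    intro ω; rw [hLneg]; simp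
  have hRint : Integrable (fun ω => (L ω).re) := by
    have h1 : IntegrableOn (fun ω => (L (-ω)).re) (Set.Iic 0) := by
      have := hint2
      rw [← neg_zero] at this
      exact this.comp_neg_Iic
    simp only [hReven] at h1
    rw [← integrableOn_univ, ← Set.Iic_union_Ici (a := (0:ℝ))]
    exact h1.union hint2
  -- the damped function
  let h : ℝ → ℂ := fun u => ((Real.exp (-a * u) * f u : ℝ) : ℂ)
  have hh0 : ∀ u < 0, h u = 0 := by
    intro u hu; simp [h, hzero u hu]
  have hhint : Integrable h := by
    have : Integrable (fun t => Real.exp (-a * t) * f t) := by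
      rw [← integrableOn_iff_integrable_of_support_subset (s := Set.Ici 0)]
      · exact hint
      · intro u hu
        by_contra hc
        exact hu (by simp [hzero u (by simpa using hc)])
    exact this.ofReal
  have hFh : ∀ ξ : ℝ, 𝓕 h ξ = L (2 * Real.pi * ξ) := by
    intro ξ
    rw [Real.fourier_real_eq_integral_exp_smul]
    simp only [hL]
    rw [← setIntegral_eq_integral_of_forall_compl_eq_zero (s := Set.Ici 0)]
    · congr 1
      ext u
      simp only [h, smul_eq_mul]
      push_cast
      rw [← mul_assoc, ← Complex.exp_add, mul_comm]
      congr 2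
      ring
    · intro u hu
      rw [hh0 u (by simpa using hu), smul_zero]
  let g : ℝ → ℂ := fun u => h u + h (-u)
  have hgint : Integrable g := hhint.add hhint.comp_neg
  have hFg : ∀ ξ : ℝ, 𝓕 g ξ = ((2 * (L (2 * Real.pi * ξ)).re : ℝ) : ℂ) := by
    intro ξ
    have e1 : 𝓕 (fun u => h (-u)) ξ = 𝓕 h (-ξ) := by
      rw [Real.fourier_real_eq, Real.fourier_real_eq, ← integral_neg_eq_self]
      simp
    have e2 : 𝓕 g ξ = 𝓕 h ξ + 𝓕 (fun u => h (-u)) ξ := by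
      simp only [Real.fourier_real_eq]
      rw [← integral_add]
      · simp [g, smul_add]
      · exact (Real.fourierIntegral_convergent_iff ξ).2 hhint |>.congr (by simp [mul_comm])
      · exact (Real.fourierIntegral_convergent_iff ξ).2 hhint.comp_neg |>.congr (by simp [mul_comm])
    rw [e2, e1, hFh, hFh, mul_neg, hLneg, Complex.add_conj]
    
  have hpi : (2 * Real.pi) ≠ 0 := by positivity
  have hFgint : Integrable (𝓕 g) := by
    have : 𝓕 g = fun ξ => ((2 * (L (2 * Real.pi * ξ)).re : ℝ) : ℂ) := funext hFg
    rw [this]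
    exact (((integrable_comp_mul_left_iff _ hpi).2 hRint).const_mul 2).ofReal
  have hgcont : ContinuousAt g t := by
    have c1 : ContinuousAt h t := by
      have := hcont.continuousAt (Ioi_mem_nhds ht)
      simp only [h]
      fun_prop
    have c2 : ContinuousAt (fun u => h (-u)) t := by
      apply (continuousAt_const (y := (0:ℂ))).congr
      filter_upwards [Ioi_mem_nhds ht] with u hu
      exact (hh0 _ (by simpa using hu)).symm
    exact c1.add c2
  have key := hgint.fourierInv_fourier_eq hFgint hgcont
  have hgt : g t = ((Real.exp (-a * t) * f t : ℝ) : ℂ) := by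
    simp only [g]
    rw [hh0 (-t) (by linarith), add_zero]
  rw [hgt, Real.fourierInv_eq'] at key
  have key2 := congrArg Complex.re key
  rw [Complex.ofReal_re] at key2
  have hI : Integrable (fun v : ℝ => Complex.exp (((2 * Real.pi * inner ℝ v t : ℝ) : ℂ) * Complex.I) • 𝓕 g v) := by
    apply hFgint.bdd_mul (c := 1)
    · exact Continuous.aestronglyMeasurable (by fun_prop)
    · filter_upwards with v
      rw [Complex.norm_exp_ofReal_mul_I]
  have e3 : (∫ v : ℝ, Complex.exp (((2 * Real.pi * inner ℝ v t : ℝ) : ℂ) * Complex.I) • 𝓕 g v).re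
      = ∫ v : ℝ, 2 * (fun ω => (L ω).re * Real.cos (ω * t)) (2 * Real.pi * v) := by
    have := integral_re (𝕜 := ℂ) hI
    simp only [RCLike.re_to_complex] at this
    rw [← this]
    congr 1
    ext v
    rw [hFg, smul_eq_mul, Complex.re_mul_ofReal, Complex.exp_ofReal_mul_I_re]
    have : 2 * Real.pi * inner ℝ v t = 2 * Real.pi * v * t := by
      simp; ring
    rw [this]
    ring
  rw [e3, integral_const_mul,
    Measure.integral_comp_mul_left (fun ω => (L ω).re * Real.cos (ω * t)) (2 * Real.pi)] at key2
  have e4 : ∫ ω : ℝ, (L ω).re * Real.cos (ω * t)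
      = 2 * ∫ ω in Set.Ici (0 : ℝ), (L ω).re * Real.cos (ω * t) := by
    rw [integral_Ici_eq_integral_Ioi, ← integral_comp_abs (f := fun ω => (L ω).re * Real.cos (ω * t))]
    congr 1
    ext ω
    rcases abs_choice ω with h | h <;> rw [h]
    rw [hReven, neg_mul, Real.cos_neg]
  rw [e4, abs_of_pos (by positivity), smul_eq_mul] at key2
  have e5 : f t = Real.exp (a * t) * (Real.exp (-a * t) * f t) := by
    rw [← mul_assoc, ← Real.exp_add]; simp
  rw [e5, ← key2]
  field_simp
end

section
/- Exact aliasing formula for the Fourier-cosine Laplace inversion series: let a ∈ ℝ, T > 0, and let f : ℝ → ℝ be continuous on [0,∞) with f(t) = 0 for t < 0, and suppose there exist M ≥ 0 and b < a with |f(t)| ≤ M e^{bt} for all t ≥ 0. Let F(s) = ∫₀^∞ f(t) e^{−st} dt, and assume Σ_{k=1}^∞ |Re F(a + ikπ/T)| < ∞. Then for every t ∈ (0, 2T), (2 e^{at}/T) [ Re F(a)/2 + Σ_{k=1}^∞ Re F(a + ikπ/T) cos(kπt/T) ] = f(t) + Σ_{n=1}^∞ [ e^{−2naT} f(t + 2nT)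 + e^{−2a(nT − t)} f(2nT − t) ]; in particular the truncated series (2 e^{at}/T)[Re F(a)/2 + Σ_{k=1}^N Re F(a + ikπ/T) cos(kπt/T)] converges, as N → ∞, to f(t) plus the exponentially small aliasing error given by the second sum. -/
open MeasureTheory

theorem aux_integrable (H : ℝ → ℝ) (hc : Continuous H) (M d : ℝ) (hd : 0 < d)
    (hb : ∀ x, |H x| ≤ M * Real.exp (-d * |x|)) : Integrable H := by
  have h1 : Integrable (fun x : ℝ => M * Real.exp (-d * |x|)) := by
    apply Integrable.const_mul
    rw [← integrableOn_univ, ← Set.Iic_union_Ioi (a := (0:ℝ)), integrableOn_union]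
    constructor
    · refine (integrableOn_exp_mul_Iic hd 0).congr_fun (fun x hx => ?_) measurableSet_Iic
      simp only [Set.mem_Iic] at hx
      simp [abs_of_nonpos hx]
    · refine (exp_neg_integrableOn_Ioi 0 hd).congr_fun (fun x hx => ?_) measurableSet_Ioi
      simp only [Set.mem_Ioi] at hx
      simp [abs_of_pos hx]
  exact h1.mono' hc.aestronglyMeasurable (Filter.Eventually.of_forall hb)

open scoped FourierTransform

theorem aux_fourier (H : ℝ → ℝ) (hi : Integrable H) (he : ∀ x, H (-x) = H x) (w : ℝ) :
    𝓕 (fun x => (H x : ℂ)) w =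
      ((2 * (∫ x in Set.Ioi (0:ℝ),
        (H x : ℂ) * Complex.exp (((-2 * Real.pi * x * w : ℝ) : ℂ) * Complex.I)).re : ℝ) : ℂ) := by
  rw [Real.fourier_real_eq_integral_exp_smul]
  set G : ℝ → ℂ := fun x => (H x : ℂ) *
    Complex.exp (((-2 * Real.pi * x * w : ℝ) : ℂ) * Complex.I) with hG
  have hGi : Integrable G := by
    have hi' : Integrable (fun x => (H x : ℂ)) := hi.ofReal
    refine hi'.mono ?_ (Filter.Eventually.of_forall fun x => ?_)
    · apply hi'.aestronglyMeasurable.mul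
      apply Continuous.aestronglyMeasurable
      fun_prop
    · simp only [hG, norm_mul, Complex.norm_exp_ofReal_mul_I, mul_one]; rfl
  have hneg : ∀ x, G (-x) = (starRingEnd ℂ) (G x) := by
    intro x
    simp only [hG, he, map_mul, Complex.conj_ofReal, ← Complex.exp_conj, Complex.conj_I]
    congr 2
    push_cast
    ring
  have h1 : (∫ v : ℝ, Complex.exp (((-2 * Real.pi * v * w : ℝ) : ℂ) * Complex.I) • (H v : ℂ))
      = ∫ v, G v := by
    simp only [hG, smul_eq_mul, mul_comm]
  rw [h1, ← intervalIntegral.integral_Iic_add_Ioi (b := 0) hGi.integrableOn hGi.integrableOn]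
  have h2 : ∫ x in Set.Iic (0:ℝ), G x = (starRingEnd ℂ) (∫ x in Set.Ioi (0:ℝ), G x) := by
    have := integral_comp_neg_Ioi (0:ℝ) G
    rw [neg_zero] at this
    rw [← this, ← integral_conj]
    simp only [hneg]
  rw [h2, add_comm, Complex.add_conj]

theorem aux_bigO (H : ℝ → ℝ) (M d : ℝ) (hd : 0 < d)
    (hb : ∀ x, |H x| ≤ M * Real.exp (-d * |x|)) :
    (fun x => (H x : ℂ)) =O[Filter.cocompact ℝ] fun x : ℝ => |x| ^ (-2 : ℝ) := by
  have h1 := ((isLittleO_exp_neg_mul_rpow_atTop hd (-2)).isBigO.comp_tendsto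
    (tendsto_norm_cocompact_atTop (E := ℝ)))
  refine Asymptotics.IsBigO.trans (Asymptotics.IsBigO.of_bound M
    (Filter.Eventually.of_forall fun x => ?_)) h1
  simpa using hb x

theorem aux_poisson (H : ℝ → ℝ) (hc : Continuous H) (he : ∀ x, H (-x) = H x) (M d : ℝ)
    (hd : 0 < d) (hb : ∀ x, |H x| ≤ M * Real.exp (-d * |x|)) (hM : 0 ≤ M) (R : ℤ → ℝ)
    (hR : ∀ k : ℤ, R k = (∫ x in Set.Ioi (0:ℝ),
        (H x : ℂ) * Complex.exp (((-2 * Real.pi * x * k : ℝ) : ℂ) * Complex.I)).re)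
    (hs : Summable fun k : ℕ => |R (k + 1)|) (x : ℝ) (hx : 0 < x) (hx1 : x < 1) :
    H x + ∑' n : ℕ, (H (x + (n + 1)) + H ((n + 1) - x)) =
      2 * R 0 + 4 * ∑' k : ℕ, R (k + 1) * Real.cos (2 * Real.pi * (k + 1) * x)
    ∧ Summable (fun n : ℕ => H (x + (n + 1)) + H ((n + 1) - x)) := by
  have hF : ∀ k : ℤ, 𝓕 (fun x => (H x : ℂ)) (k:ℝ) = ((2 * R k : ℝ) : ℂ) := by
    intro k
    rw [aux_fourier H (aux_integrable H hc M d hd hb) he, hR]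
  have hsymm : ∀ k : ℤ, R (-k) = R k := by
    intro k
    rw [hR, hR, ← Complex.conj_re, ← integral_conj]
    congr 2
    ext x
    simp only [map_mul, Complex.conj_ofReal, ← Complex.exp_conj, Complex.conj_I]
    congr 2
    push_cast
    ring
  have hsR : Summable fun k : ℕ => R (k + 1) := hs.of_abs
  have hsF : Summable fun n : ℤ => 𝓕 (fun x => (H x : ℂ)) (n:ℝ) := by
    simp only [hF]
    apply Complex.summable_ofReal.mpr
    apply Summable.mul_left
    apply Summable.of_add_one_of_neg_add_one
    · exact hsR
    · simpa only [hsymm] using hsR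
  have hP := Real.tsum_eq_tsum_fourier_of_rpow_decay_of_summable (f := fun x => (H x : ℂ))
    (by fun_prop) (by norm_num : (1:ℝ) < 2) (aux_bigO H M d hd hb) hsF x
  have hgeo : Summable fun n : ℕ => M * Real.exp (n * (-d)) :=
    (Real.summable_exp_nat_mul_iff.mpr (by linarith)).mul_left M
  have hs1 : Summable fun n : ℕ => H (x + (n + 1)) := by
    refine Summable.of_norm_bounded hgeo fun n => (hb _).trans ?_
    have hn : (0:ℝ) ≤ n := n.cast_nonneg
    refine mul_le_mul_of_nonneg_left (Real.exp_le_exp.mpr ?_) hM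
    rw [abs_of_nonneg (by linarith)]
    nlinarith
  have hs2 : Summable fun n : ℕ => H ((n + 1) - x) := by
    refine Summable.of_norm_bounded hgeo fun n => (hb _).trans ?_
    have hn : (0:ℝ) ≤ n := n.cast_nonneg
    refine mul_le_mul_of_nonneg_left (Real.exp_le_exp.mpr ?_) hM
    rw [abs_of_nonneg (by linarith)]
    nlinarith
  refine ⟨?_, hs1.add hs2⟩
  have hL : HasSum (fun n : ℤ => H (x + n))
      ((∑' n : ℕ, H (x + (n + 1))) + H (x + (0:ℤ)) + ∑' n : ℕ, H ((n + 1) - x)) := by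
    apply HasSum.of_add_one_of_neg_add_one (f := fun n : ℤ => H (x + n))
    · simpa using hs1.hasSum
    · have h := hs2.hasSum
      refine h.congr_fun ?_ |> id
      intro n
      rw [← he]
      congr 1
      push_cast
      ring
  have hcos : Summable fun k : ℕ => R (k + 1) * Real.cos (2 * Real.pi * (k + 1) * x) := by
    refine Summable.of_norm_bounded hs fun k => ?_
    rw [norm_mul]
    exact mul_le_of_le_one_right (abs_nonneg _) (Real.abs_cos_le_one _)
  have hfs : Summable fun n : ℤ => 𝓕 (fun x => (H x : ℂ)) (n:ℝ) * fourier n (x : UnitAddCircle) := by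
    apply Summable.of_norm
    refine hsF.norm.congr fun n => ?_
    rw [norm_mul, fourier_apply, Circle.norm_coe, mul_one]
  have hre : ∀ n : ℤ, (𝓕 (fun x => (H x : ℂ)) (n:ℝ) * fourier n (x : UnitAddCircle)).re
      = 2 * (R n * Real.cos (2 * Real.pi * n * x)) := by
    intro n
    rw [hF, fourier_coe_apply, Complex.re_ofReal_mul]
    have : (2 * Real.pi * Complex.I * n * x / ((1:ℝ):ℂ) : ℂ)
      = ((2 * Real.pi * n * x : ℝ) : ℂ) * Complex.I := by push_cast; ring
    rw [this, Complex.exp_ofReal_mul_I_re]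
    ring
  have hRS : HasSum (fun n : ℤ => R n * Real.cos (2 * Real.pi * n * x))
      ((∑' k : ℕ, R (k + 1) * Real.cos (2 * Real.pi * (k + 1) * x))
        + R 0 * Real.cos (2 * Real.pi * (0:ℤ) * x) +
        ∑' k : ℕ, R (k + 1) * Real.cos (2 * Real.pi * (k + 1) * x)) := by
    apply HasSum.of_add_one_of_neg_add_one (f := fun n : ℤ => R n * Real.cos (2 * Real.pi * n * x))
    · simpa using hcos.hasSum
    · refine hcos.hasSum.congr_fun ?_ |> id
      intro n
      rw [hsymm, ← Real.cos_neg]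
      congr 2
      push_cast
      ring
  have hP' := congrArg Complex.re hP
  rw [Complex.re_tsum hfs] at hP'
  simp only [hre] at hP'
  rw [tsum_mul_left, hRS.tsum_eq, ← Complex.ofReal_tsum, Complex.ofReal_re, hL.tsum_eq] at hP'
  rw [hs1.tsum_add hs2]
  simp at hP'
  linarith



/-- **Exact aliasing formula for the Fourier-cosine Laplace inversion series**:
for `t ∈ (0, 2T)`,
`(2 e^{at}/T) [ Re F(a)/2 + Σ_{k≥1} Re F(a + ikπ/T) cos(kπt/T) ]
  = f(t) + Σ_{n≥1} [ e^{−2naT} f(t + 2nT) + e^{−2a(nT − t)} f(2nT − t) ]`,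
and the aliasing series on the right converges. -/
theorem laplace_inversion_aliasing (a T : ℝ) (hT : 0 < T) (f : ℝ → ℝ)
    (hcont : ContinuousOn f (Set.Ici 0))
    (hzero : ∀ t < (0 : ℝ), f t = 0)
    (M b : ℝ) (hM : 0 ≤ M) (hb : b < a)
    (hgrowth : ∀ t : ℝ, 0 ≤ t → |f t| ≤ M * Real.exp (b * t))
    (F : ℂ → ℂ)
    (hF : ∀ s : ℂ, F s = ∫ t in Set.Ioi (0 : ℝ), (f t : ℂ) * Complex.exp (-s * (t : ℂ)))
    (hsum : Summable fun k : ℕ =>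
      |(F ((a : ℂ) + (((k + 1 : ℝ) * Real.pi / T : ℝ) : ℂ) * Complex.I)).re|) :
    ∀ t ∈ Set.Ioo (0 : ℝ) (2 * T),
      ((2 * Real.exp (a * t) / T) *
        ((F (a : ℂ)).re / 2
          + ∑' k : ℕ, (F ((a : ℂ) + (((k + 1 : ℝ) * Real.pi / T : ℝ) : ℂ) * Complex.I)).re
              * Real.cos ((k + 1 : ℝ) * Real.pi * t / T))
        = f t + ∑' m : ℕ,
            (Real.exp (-2 * (m + 1 : ℝ) * a * T) * f (t + 2 * (m + 1 : ℝ) * T)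
              + Real.exp (-2 * a * ((m + 1 : ℝ) * T - t)) * f (2 * (m + 1 : ℝ) * T - t)))
      ∧ Summable (fun m : ℕ =>
          Real.exp (-2 * (m + 1 : ℝ) * a * T) * f (t + 2 * (m + 1 : ℝ) * T)
            + Real.exp (-2 * a * ((m + 1 : ℝ) * T - t)) * f (2 * (m + 1 : ℝ) * T - t)) := by
  intro t ht
  obtain ⟨ht0, ht1⟩ := ht
  have hc : 0 < 2 * T := by linarith
  have hT0 : T ≠ 0 := hT.ne'
  have hπ := Real.pi_pos
  set H : ℝ → ℝ := fun x => Real.exp (-a * (2 * T * |x|)) * f (2 * T * |x|) with hH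
  have hHc : Continuous H := by
    have h1 : Continuous (fun x : ℝ => f (2 * T * |x|)) :=
      hcont.comp_continuous (by fun_prop) (fun x => by
        simp only [Set.mem_Ici]; positivity)
    have h2 : Continuous (fun x : ℝ => Real.exp (-a * (2 * T * |x|))) := by fun_prop
    exact h2.mul h1
  have hHe : ∀ x, H (-x) = H x := by
    intro x
    simp only [hH, abs_neg]
  have hHb : ∀ x, |H x| ≤ M * Real.exp (-((a - b) * (2 * T)) * |x|) := by
    intro x
    simp only [hH]
    rw [abs_mul, abs_of_pos (Real.exp_pos _)]
    calc _ ≤ Real.exp (-a * (2 * T * |x|)) * (M * Real.exp (b * (2 * T * |x|))) :=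
          mul_le_mul_of_nonneg_left (hgrowth _ (by positivity)) (Real.exp_pos _).le
      _ = M * (Real.exp (-a * (2 * T * |x|)) * Real.exp (b * (2 * T * |x|))) := by ring
      _ = _ := by
        rw [← Real.exp_add]
        congr 2
        ring
  have hRk : ∀ k : ℤ, (2 * T)⁻¹ * (F ((a : ℂ) + ((k * Real.pi / T : ℝ) : ℂ) * Complex.I)).re
      = (∫ x in Set.Ioi (0:ℝ),
        (H x : ℂ) * Complex.exp (((-2 * Real.pi * x * k : ℝ) : ℂ) * Complex.I)).re := by
    intro k
    have h1 := integral_comp_mul_left_Ioi (fun t : ℝ => (f t : ℂ) *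
      Complex.exp (-((a : ℂ) + ((k * Real.pi / T : ℝ) : ℂ) * Complex.I) * (t : ℂ))) 0 hc
    rw [mul_zero, ← hF] at h1
    have h2 : (∫ x in Set.Ioi (0:ℝ),
        (H x : ℂ) * Complex.exp (((-2 * Real.pi * x * k : ℝ) : ℂ) * Complex.I))
        = (2 * T)⁻¹ • F ((a : ℂ) + ((k * Real.pi / T : ℝ) : ℂ) * Complex.I) := by
      rw [← h1]
      refine setIntegral_congr_fun measurableSet_Ioi fun x hx => ?_
      simp only [Set.mem_Ioi] at hx
      simp only [hH, abs_of_pos hx, Complex.ofReal_mul, Complex.ofReal_exp]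
      rw [mul_comm (Complex.exp _), mul_assoc, ← Complex.exp_add]
      congr 2
      have hT' : (T : ℂ) ≠ 0 := by exact_mod_cast hT0
      push_cast
      field_simp
      ring
    rw [h2, Complex.smul_re, smul_eq_mul]
  have hx0 : 0 < t / (2 * T) := by positivity
  have hx1 : t / (2 * T) < 1 := by rwa [div_lt_one hc]
  obtain ⟨hA, hB⟩ := aux_poisson H hHc hHe M ((a - b) * (2 * T))
    (mul_pos (by linarith) hc) hHb hM
    (fun k => (2 * T)⁻¹ * (F ((a : ℂ) + ((k * Real.pi / T : ℝ) : ℂ) * Complex.I)).re) hRk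
    (by
      simp only [abs_mul]
      apply Summable.mul_left
      simpa using hsum) (t / (2 * T)) hx0 hx1
  have hterm : ∀ m : ℕ, Real.exp (-2 * (m + 1 : ℝ) * a * T) * f (t + 2 * (m + 1 : ℝ) * T)
              + Real.exp (-2 * a * ((m + 1 : ℝ) * T - t)) * f (2 * (m + 1 : ℝ) * T - t)
      = Real.exp (a * t) * (H (t / (2 * T) + (m + 1)) + H ((m + 1) - t / (2 * T))) := by
    intro m
    have hm : (0:ℝ) ≤ m := m.cast_nonneg
    simp only [hH]
    rw [abs_of_pos (by linarith : 0 < t / (2 * T) + (m + 1)),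
      abs_of_pos (by linarith : 0 < ((m:ℝ) + 1) - t / (2 * T))]
    have e1 : 2 * T * (t / (2 * T) + (m + 1)) = t + 2 * (m + 1 : ℝ) * T := by
      field_simp
    have e2 : 2 * T * ((m + 1) - t / (2 * T)) = 2 * (m + 1 : ℝ) * T - t := by
      field_simp
    rw [e1, e2]
    have e3 : Real.exp (-2 * (m + 1 : ℝ) * a * T)
        = Real.exp (a * t) * Real.exp (-a * (t + 2 * (m + 1 : ℝ) * T)) := by
      rw [← Real.exp_add]; congr 1; ring
    have e4 : Real.exp (-2 * a * ((m + 1 : ℝ) * T - t))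
        = Real.exp (a * t) * Real.exp (-a * (2 * (m + 1 : ℝ) * T - t)) := by
      rw [← Real.exp_add]; congr 1; ring
    rw [e3, e4]
    ring
  have hft : f t = Real.exp (a * t) * H (t / (2 * T)) := by
    simp only [hH]
    rw [abs_of_pos hx0, mul_div_cancel₀ _ hc.ne', ← mul_assoc, ← Real.exp_add]
    simp
  simp only [hterm]
  refine ⟨?_, hB.mul_left _⟩
  rw [tsum_mul_left, hft, ← mul_add, hA]
  have hs : ∀ k : ℕ, (2 * T)⁻¹ * (F ((a : ℂ) + ((((k:ℤ) + 1 : ℤ) * Real.pi / T : ℝ) : ℂ) * Complex.I)).re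
        * Real.cos (2 * Real.pi * (k + 1) * (t / (2 * T)))
      = (2 * T)⁻¹ * ((F ((a : ℂ) + (((k + 1 : ℝ) * Real.pi / T : ℝ) : ℂ) * Complex.I)).re
              * Real.cos ((k + 1 : ℝ) * Real.pi * t / T)) := by
    intro k
    have e : 2 * Real.pi * (k + 1) * (t / (2 * T)) = (k + 1 : ℝ) * Real.pi * t / T := by
      field_simp
    rw [e, mul_assoc]
    push_cast
    rfl
  simp only [hs]
  rw [tsum_mul_left]
  simp only [Int.cast_zero, zero_mul, zero_div, Complex.ofReal_zero, add_zero]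
  generalize (∑' k : ℕ, (F ((a : ℂ) + (((k + 1 : ℝ) * Real.pi / T : ℝ) : ℂ) * Complex.I)).re
              * Real.cos ((k + 1 : ℝ) * Real.pi * t / T)) = S
  field_simp
  ring
end

section
/- Conservation of total mechanical energy for linear bond-based peridynamics with clamped volume constraints: let Ω and Ω_τ be disjoint bounded measurable subsets of ℝⁿ, ρ > 0 a constant, and C : ℝⁿ → ℝ^{n×n} a bounded measurable micromodulus with C(−ξ) = C(ξ) and C(ξ)ᵀ = C(ξ) for all ξ. Let u : ℝⁿ × ℝ → ℝⁿ be twice continuously differentiable in t, with u, ∂_t u, ∂²_t u bounded on (Ω ∪ Ω_τ) × K for every compact K ⊂ ℝ, satisfying ρ ∂²_t u(x,t) = ∫_{Ω∪Ω_τ} C(x' − x)·(u(x',t) − u(x,t)) dx' for all x ∈ Ω and t ∈ ℝ, and u(x,t) = 0 for all x ∈ Ω_τ and t ∈ ℝ. Define the total energy E(t) = (1/4) ∫_{Ω∪Ω_τ} ∫_{Ω∪Ω_τ} (u(x',t) − u(x,t)) · C(x' − x)·(u(x',t) − u(x,t)) dx' dx + (1/2) ∫_{Ω∪Ω_τ}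 ρ |∂_t u(x,t)|² dx. Then E(t) is constant in t. -/
open MeasureTheory Matrix

/-- Total mechanical energy of a linear bond-based peridynamic body:
elastic energy plus kinetic energy. -/
noncomputable def pdTotalEnergy {n : ℕ} (Ω Ωτ : Set (Fin n → ℝ)) (ρ : ℝ)
    (C : (Fin n → ℝ) → Matrix (Fin n) (Fin n) ℝ)
    (u : (Fin n → ℝ) → ℝ → (Fin n → ℝ)) (t : ℝ) : ℝ :=
  (1 / 4) * (∫ x in Ω ∪ Ωτ, ∫ x' in Ω ∪ Ωτ,
      (u x' t - u x t) ⬝ᵥ (C (x' - x)).mulVec (u x' t - u x t))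
    + (1 / 2) * ∫ x in Ω ∪ Ωτ, ρ * (∑ i, (deriv (u x) t i) ^ 2)

theorem pd_meas_deriv {α F : Type*} [MeasurableSpace α] [NormedAddCommGroup F] [NormedSpace ℝ F]
    [MeasurableSpace F] [BorelSpace F] [SecondCountableTopology F]
    (f : α → ℝ → F) (f' : α → F) (t : ℝ)
    (hm : ∀ s, Measurable fun x => f x s) (hd : ∀ x, HasDerivAt (f x) (f' x) t) :
    Measurable f' := by
  have hlim : Filter.Tendsto (fun k : ℕ => (1 / ((k : ℝ) + 1))) Filter.atTop
      (nhdsWithin 0 {0}ᶜ) := by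
    refine tendsto_nhdsWithin_iff.2 ⟨tendsto_one_div_add_atTop_nhds_zero_nat, ?_⟩
    refine Filter.Eventually.of_forall fun k => ?_
    have : (0 : ℝ) < 1 / ((k : ℝ) + 1) := by positivity
    exact this.ne'
  refine measurable_of_tendsto_metrizable (f := fun (k : ℕ) x =>
    (1 / ((k : ℝ) + 1))⁻¹ • (f x (t + 1 / ((k : ℝ) + 1)) - f x t)) ?_ ?_
  · intro k
    exact ((hm _).sub (hm _)).const_smul _
  · rw [tendsto_pi_nhds]
    intro x
    exact ((hd x).tendsto_slope_zero).comp hlim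

theorem pd_deriv_int {α : Type*} [MeasurableSpace α] (μ : Measure α) [IsFiniteMeasure μ]
    (f f' : α → ℝ → ℝ) (t : ℝ)
    (hm : ∀ s, Measurable fun x => f x s) (hd : ∀ x s, HasDerivAt (f x) (f' x s) s) (A B : ℝ)
    (hA : ∀ᵐ x ∂μ, |f x t| ≤ A) (hB : ∀ᵐ x ∂μ, ∀ s ∈ Metric.ball t 1, |f' x s| ≤ B) :
    HasDerivAt (fun s => ∫ x, f x s ∂μ) (∫ x, f' x t ∂μ) t := by
  refine (hasDerivAt_integral_of_dominated_loc_of_deriv_le (F := fun s x => f x s)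
    (F' := fun s x => f' x s) (bound := fun _ => B) (s := Metric.ball t 1)
    (Metric.ball_mem_nhds t one_pos) ?_ ?_ ?_ ?_ ?_ ?_).2
  · exact Filter.Eventually.of_forall fun s => (hm s).aestronglyMeasurable
  · exact Integrable.of_bound (hm t).aestronglyMeasurable A hA
  · exact (pd_meas_deriv f (fun x => f' x t) t hm (fun x => hd x t)).aestronglyMeasurable
  · exact hB
  · exact integrable_const B
  · exact Filter.Eventually.of_forall fun x s _ => hd x s

theorem pd_form_bound {n : ℕ} (A : Matrix (Fin n) (Fin n) ℝ) (w z : Fin n → ℝ) (M a b : ℝ)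
    (hA : ∀ i j, |A i j| ≤ M) (hw : ‖w‖ ≤ a) (hz : ‖z‖ ≤ b) :
    |w ⬝ᵥ A.mulVec z| ≤ n * (n * (a * (M * b))) := by
  have ha : 0 ≤ a := (norm_nonneg _).trans hw
  simp only [dotProduct, mulVec, Finset.mul_sum]
  refine (Finset.abs_sum_le_sum_abs _ _).trans ?_
  have : ∀ i ∈ Finset.univ, |∑ j, w i * (A i j * z j)| ≤ n * (a * (M * b)) := by
    intro i _
    refine (Finset.abs_sum_le_sum_abs _ _).trans ?_
    have : ∀ j ∈ Finset.univ, |w i * (A i j * z j)| ≤ a * (M * b) := by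
      intro j _
      have hM : 0 ≤ M := (abs_nonneg _).trans (hA i j)
      have h1 : |w i| ≤ a := (norm_le_pi_norm w i).trans hw
      have h2 : |z j| ≤ b := (norm_le_pi_norm z j).trans hz
      rw [abs_mul, abs_mul]
      have := hA i j
      gcongr
    refine (Finset.sum_le_card_nsmul _ _ _ this).trans ?_
    simp
  refine (Finset.sum_le_card_nsmul _ _ _ this).trans ?_
  simp

theorem pd_form_meas {α : Type*} [MeasurableSpace α] {n : ℕ}
    (A : α → Matrix (Fin n) (Fin n) ℝ) (w z : α → Fin n → ℝ)
    (hA : ∀ i j, Measurable fun x => A x i j) (hw : Measurable w) (hz : Measurable z) :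
    Measurable fun x => w x ⬝ᵥ (A x).mulVec (z x) := by
  simp only [dotProduct, mulVec]
  refine Finset.measurable_sum _ fun i _ => ?_
  refine ((measurable_pi_apply i).comp hw).mul ?_
  refine Finset.measurable_sum _ fun j _ => ?_
  exact (hA i j).mul ((measurable_pi_apply j).comp hz)

theorem pd_form_deriv {n : ℕ} (A : Matrix (Fin n) (Fin n) ℝ) (hA : Aᵀ = A)
    (w : ℝ → Fin n → ℝ) (w' : Fin n → ℝ) (t : ℝ) (hw : HasDerivAt w w' t) :
    HasDerivAt (fun s => w s ⬝ᵥ A.mulVec (w s)) (2 * (w' ⬝ᵥ A.mulVec (w t))) t := by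
  have hsym : w t ⬝ᵥ A.mulVec w' = w' ⬝ᵥ A.mulVec (w t) := by
    rw [dotProduct_mulVec, ← mulVec_transpose, hA, dotProduct_comm]
  have h := hasDerivAt_pi.1 hw
  have : HasDerivAt (fun s => w s ⬝ᵥ A.mulVec (w s))
      (w' ⬝ᵥ A.mulVec (w t) + w t ⬝ᵥ A.mulVec w') t := by
    simp only [dotProduct, mulVec, ← Finset.sum_add_distrib]
    refine HasDerivAt.fun_sum fun i _ => ?_
    refine (h i).mul ?_
    refine HasDerivAt.fun_sum fun j _ => ?_
    exact (h j).const_mul _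
  rw [hsym] at this
  convert this using 1
  ring

/-- **Conservation of total mechanical energy for linear bond-based peridynamics
with clamped volume constraints.** -/
theorem pd_energy_conservation {n : ℕ} (hn : 1 ≤ n)
    (Ω Ωτ : Set (Fin n → ℝ)) (hΩ : MeasurableSet Ω) (hΩτ : MeasurableSet Ωτ)
    (hΩbdd : Bornology.IsBounded Ω) (hΩτbdd : Bornology.IsBounded Ωτ)
    (hdisj : Disjoint Ω Ωτ)
    (ρ : ℝ) (hρ : 0 < ρ)
    (C : (Fin n → ℝ) → Matrix (Fin n) (Fin n) ℝ)
    (hCmeas : ∀ i j, Measurable fun ξ => C ξ i j)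
    (hCbdd : ∃ M : ℝ, ∀ ξ i j, |C ξ i j| ≤ M)
    (hCeven : ∀ ξ, C (-ξ) = C ξ)
    (hCsymm : ∀ ξ, (C ξ)ᵀ = C ξ)
    (u : (Fin n → ℝ) → ℝ → (Fin n → ℝ))
    (humeas : Measurable fun p : (Fin n → ℝ) × ℝ => u p.1 p.2)
    (hu2 : ∀ x, ContDiff ℝ 2 (u x))
    (hubdd : ∀ K : Set ℝ, IsCompact K → ∃ M : ℝ,
      ∀ x ∈ Ω ∪ Ωτ, ∀ t ∈ K,
        ‖u x t‖ ≤ M ∧ ‖deriv (u x) t‖ ≤ M ∧ ‖deriv (deriv (u x)) t‖ ≤ M)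
    (heq : ∀ x ∈ Ω, ∀ t : ℝ,
      ρ • deriv (deriv (u x)) t
        = ∫ x' in Ω ∪ Ωτ, (C (x' - x)).mulVec (u x' t - u x t))
    (hclamp : ∀ x ∈ Ωτ, ∀ t : ℝ, u x t = 0) :
    ∀ t₁ t₂ : ℝ, pdTotalEnergy Ω Ωτ ρ C u t₁ = pdTotalEnergy Ω Ωτ ρ C u t₂ := by
  set D : Set (Fin n → ℝ) := Ω ∪ Ωτ with hD
  obtain ⟨M, hM⟩ := hCbdd
  have hDm : MeasurableSet D := hΩ.union hΩτ
  have hDfin : volume D < ⊤ := (hΩbdd.union hΩτbdd).measure_lt_top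
  have : IsFiniteMeasure (volume.restrict D) := ⟨by simpa using hDfin⟩
  set μ : Measure (Fin n → ℝ) := volume.restrict D with hμ
  have haeD : ∀ᵐ x ∂μ, x ∈ D := ae_restrict_mem hDm
  have haeP : ∀ᵐ p ∂(μ.prod μ), p.1 ∈ D ∧ p.2 ∈ D := by
    rw [hμ, Measure.prod_restrict]
    exact ae_restrict_mem (hDm.prod hDm)
  have hd1 : ∀ x s, HasDerivAt (u x) (deriv (u x) s) s := fun x s =>
    ((hu2 x).differentiable (by norm_num) s).hasDerivAt
  have hd2 : ∀ x s, HasDerivAt (deriv (u x)) (deriv (deriv (u x)) s) s := fun x s => by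
    have : ContDiff ℝ 1 (deriv (u x)) := ((contDiff_succ_iff_deriv (n := 1)).1
      (by simpa [one_add_one_eq_two] using hu2 x)).2.2
    exact (this.differentiable (by norm_num) s).hasDerivAt
  have hum : ∀ s, Measurable fun x => u x s := fun s =>
    humeas.comp (measurable_id.prodMk measurable_const)
  have hvm : ∀ s, Measurable fun x => deriv (u x) s := fun s =>
    pd_meas_deriv u _ s hum (fun x => hd1 x s)
  have ham : ∀ s, Measurable fun x => deriv (deriv (u x)) s := fun s =>
    pd_meas_deriv (fun x => deriv (u x)) _ s hvm (fun x => hd2 x s)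
  have hv0 : ∀ x ∈ Ωτ, ∀ t, deriv (u x) t = 0 := by
    intro x hx t
    have : u x = fun _ => 0 := funext (hclamp x hx)
    rw [this]; simp
  have hCm2 : ∀ i j, Measurable fun p : (Fin n → ℝ) × (Fin n → ℝ) => C (p.2 - p.1) i j :=
    fun i j => (hCmeas i j).comp (measurable_snd.sub measurable_fst)
  -- the derivative of the energy vanishes
  have key : ∀ t, HasDerivAt (pdTotalEnergy Ω Ωτ ρ C u) 0 t := by
    intro t
    obtain ⟨K, hK⟩ := hubdd (Metric.closedBall t 1) (isCompact_closedBall t 1)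
    have htt : t ∈ Metric.closedBall t 1 := Metric.mem_closedBall_self zero_le_one
    -- pointwise bounds
    have bdu : ∀ x ∈ D, ∀ x' ∈ D, ∀ s ∈ Metric.closedBall t 1, ‖u x' s - u x s‖ ≤ K + K :=
      fun x hx x' hx' s hs => (norm_sub_le _ _).trans
        (add_le_add (hK x' hx' s hs).1 (hK x hx s hs).1)
    have bdv : ∀ x ∈ D, ∀ x' ∈ D, ∀ s ∈ Metric.closedBall t 1,
        ‖deriv (u x') s - deriv (u x) s‖ ≤ K + K :=
      fun x hx x' hx' s hs => (norm_sub_le _ _).trans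
        (add_le_add (hK x' hx' s hs).2.1 (hK x hx s hs).2.1)
    -- elastic part
    let Q : ((Fin n → ℝ) × (Fin n → ℝ)) → ℝ → ℝ := fun p s =>
      (u p.2 s - u p.1 s) ⬝ᵥ (C (p.2 - p.1)).mulVec (u p.2 s - u p.1 s)
    have hum2 : ∀ s, Measurable fun p : (Fin n → ℝ) × (Fin n → ℝ) => u p.2 s - u p.1 s :=
      fun s => ((hum s).comp measurable_snd).sub ((hum s).comp measurable_fst)
    have hQm : ∀ s, Measurable fun p => Q p s := fun s =>
      pd_form_meas _ _ _ hCm2 (hum2 s) (hum2 s)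
    have hQd : HasDerivAt (fun s => ∫ p, Q p s ∂(μ.prod μ))
        (∫ p, 2 * ((deriv (u p.2) t - deriv (u p.1) t) ⬝ᵥ
          (C (p.2 - p.1)).mulVec (u p.2 t - u p.1 t)) ∂(μ.prod μ)) t := by
      refine pd_deriv_int (μ.prod μ) Q (fun p s => 2 * ((deriv (u p.2) s - deriv (u p.1) s) ⬝ᵥ
          (C (p.2 - p.1)).mulVec (u p.2 s - u p.1 s))) t hQm ?_
          (n * (n * ((K + K) * (M * (K + K))))) (2 * (n * (n * ((K + K) * (M * (K + K)))))) ?_ ?_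
      · intro p s
        exact pd_form_deriv _ (hCsymm _) (fun s => u p.2 s - u p.1 s) _ s
          ((hd1 p.2 s).sub (hd1 p.1 s))
      · filter_upwards [haeP] with p hp
        exact pd_form_bound _ _ _ M _ _ (hM _) (bdu _ hp.1 _ hp.2 t htt)
          (bdu _ hp.1 _ hp.2 t htt)
      · filter_upwards [haeP] with p hp s hs
        have hs' := Metric.ball_subset_closedBall hs
        rw [abs_mul, abs_two]
        exact mul_le_mul_of_nonneg_left (pd_form_bound _ _ _ M _ _ (hM _)
          (bdv _ hp.1 _ hp.2 s hs') (bdu _ hp.1 _ hp.2 s hs')) zero_le_two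
    -- integrals on the product are iterated integrals, locally in time
    have hfub : (fun s => ∫ p, Q p s ∂(μ.prod μ)) =
        fun s => ∫ x, ∫ x', (u x' s - u x s) ⬝ᵥ (C (x' - x)).mulVec (u x' s - u x s) ∂μ ∂μ := by
      funext s
      refine integral_prod (fun p => Q p s) ?_
      obtain ⟨K', hK'⟩ := hubdd {s} isCompact_singleton
      refine Integrable.of_bound (hQm s).aestronglyMeasurable
        (n * (n * ((K' + K') * (M * (K' + K'))))) ?_
      filter_upwards [haeP] with p hp
      have hb : ‖u p.2 s - u p.1 s‖ ≤ K' + K' := (norm_sub_le _ _).trans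
        (add_le_add (hK' _ hp.2 s rfl).1 (hK' _ hp.1 s rfl).1)
      exact pd_form_bound _ _ _ M _ _ (hM _) hb hb
    -- kinetic part
    have hTd : HasDerivAt (fun s => ∫ x, ρ * (∑ i, (deriv (u x) s i) ^ 2) ∂μ)
        (∫ x, 2 * (deriv (u x) t ⬝ᵥ ρ • deriv (deriv (u x)) t) ∂μ) t := by
      have hform : ∀ (w z : Fin n → ℝ), w ⬝ᵥ ρ • z
          = w ⬝ᵥ (ρ • (1 : Matrix (Fin n) (Fin n) ℝ)).mulVec z := by
        intro w z
        rw [smul_mulVec, one_mulVec]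
      have hsq : ∀ (w : Fin n → ℝ), ρ * (∑ i, (w i) ^ 2)
          = w ⬝ᵥ (ρ • (1 : Matrix (Fin n) (Fin n) ℝ)).mulVec w := by
        intro w
        rw [← hform, dotProduct_smul, smul_eq_mul, dotProduct]
        simp only [pow_two]
      have hRb : ∀ i j, |(ρ • (1 : Matrix (Fin n) (Fin n) ℝ)) i j| ≤ ρ := by
        intro i j
        rw [Matrix.smul_apply, Matrix.one_apply]
        split_ifs <;> simp [abs_of_pos hρ, hρ.le]
      have hRs : (ρ • (1 : Matrix (Fin n) (Fin n) ℝ))ᵀ = ρ • 1 := by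
        rw [transpose_smul, transpose_one]
      have hcomm : ∀ (w z : Fin n → ℝ), w ⬝ᵥ ρ • z
          = z ⬝ᵥ (ρ • (1 : Matrix (Fin n) (Fin n) ℝ)).mulVec w := by
        intro w z
        rw [smul_mulVec, one_mulVec, dotProduct_smul, dotProduct_smul, dotProduct_comm]
      simp only [hsq, hcomm]
      refine pd_deriv_int μ (fun x s => deriv (u x) s ⬝ᵥ
        (ρ • (1 : Matrix (Fin n) (Fin n) ℝ)).mulVec (deriv (u x) s))
        (fun x s => 2 * (deriv (deriv (u x)) s ⬝ᵥ
        (ρ • (1 : Matrix (Fin n) (Fin n) ℝ)).mulVec (deriv (u x) s))) t ?_ ?_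
        (n * (n * (K * (ρ * K)))) (2 * (n * (n * (K * (ρ * K))))) ?_ ?_
      · intro s
        exact pd_form_meas _ _ _ (fun _ _ => measurable_const) (hvm s) (hvm s)
      · intro x s
        exact pd_form_deriv _ hRs (deriv (u x)) _ s (hd2 x s)
      · filter_upwards [haeD] with x hx
        exact pd_form_bound _ _ _ ρ _ _ hRb (hK x hx t htt).2.1 (hK x hx t htt).2.1
      · filter_upwards [haeD] with x hx s hs
        have hs' := Metric.ball_subset_closedBall hs
        rw [abs_mul, abs_two]
        exact mul_le_mul_of_nonneg_left (pd_form_bound _ _ _ ρ _ _ hRb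
          (hK x hx s hs').2.2 (hK x hx s hs').2.1) zero_le_two
    -- the work identity
    let G : ((Fin n → ℝ) × (Fin n → ℝ)) → ℝ := fun p =>
      deriv (u p.1) t ⬝ᵥ (C (p.2 - p.1)).mulVec (u p.2 t - u p.1 t)
    have hGi : Integrable G (μ.prod μ) := by
      refine Integrable.of_bound (pd_form_meas _ _ _ hCm2 ((hvm t).comp measurable_fst)
        (hum2 t)).aestronglyMeasurable (n * (n * (K * (M * (K + K))))) ?_
      filter_upwards [haeP] with p hp
      exact pd_form_bound _ _ _ M _ _ (hM _) (hK _ hp.1 t htt).2.1 (bdu _ hp.1 _ hp.2 t htt)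
    have hsplit : ∀ p : (Fin n → ℝ) × (Fin n → ℝ),
        2 * ((deriv (u p.2) t - deriv (u p.1) t) ⬝ᵥ
          (C (p.2 - p.1)).mulVec (u p.2 t - u p.1 t)) = 2 * (-(G p.swap) - G p) := by
      intro p
      have h1 : C (p.1 - p.2) = C (p.2 - p.1) := by rw [← hCeven, neg_sub]
      have h2 : u p.1 t - u p.2 t = -(u p.2 t - u p.1 t) := (neg_sub _ _).symm
      simp only [G, Prod.fst_swap, Prod.snd_swap]
      rw [h1, h2, mulVec_neg, dotProduct_neg, neg_neg, sub_dotProduct]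
    have hQval : (∫ p, 2 * ((deriv (u p.2) t - deriv (u p.1) t) ⬝ᵥ
          (C (p.2 - p.1)).mulVec (u p.2 t - u p.1 t)) ∂(μ.prod μ))
        = -4 * ∫ p, G p ∂(μ.prod μ) := by
      simp only [hsplit]
      have hGs : Integrable (fun p => -(G p.swap)) (μ.prod μ) := hGi.swap.neg
      rw [integral_const_mul, integral_sub hGs hGi, integral_neg]
      have : ∫ p, G p.swap ∂(μ.prod μ) = ∫ p, G p ∂(μ.prod μ) := integral_prod_swap G
      rw [this]; ring
    have hGval : ∫ p, G p ∂(μ.prod μ) = ∫ x, deriv (u x) t ⬝ᵥ ρ • deriv (deriv (u x)) t ∂μ := by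
      rw [integral_prod G hGi]
      refine integral_congr_ae ?_
      filter_upwards [haeD] with x hx
      rcases hx with hx | hx
      · rw [heq x hx t]
        have hi : Integrable (fun x' => (C (x' - x)).mulVec (u x' t - u x t)) μ := by
          refine Integrable.of_eval fun i => ?_
          have hmi : Measurable fun x' =>
              (Pi.single i 1 : Fin n → ℝ) ⬝ᵥ (C (x' - x)).mulVec (u x' t - u x t) :=
            pd_form_meas _ _ _ (fun i j => (hCmeas i j).comp (measurable_id.sub_const x))
              measurable_const ((hum t).sub_const _)
          have hii : Integrable (fun x' =>
              (Pi.single i 1 : Fin n → ℝ) ⬝ᵥ (C (x' - x)).mulVec (u x' t - u x t)) μ := by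
            refine Integrable.of_bound hmi.aestronglyMeasurable
              (n * (n * (‖(Pi.single i 1 : Fin n → ℝ)‖ * (M * (K + K))))) ?_
            filter_upwards [haeD] with x' hx'
            exact pd_form_bound _ _ _ M _ _ (hM _) le_rfl (bdu _ (Or.inl hx) _ hx' t htt)
          simpa only [single_one_dotProduct] using hii
        let L : (Fin n → ℝ) →L[ℝ] ℝ :=
          LinearMap.toContinuousLinearMap (dotProductBilin ℝ ℝ (deriv (u x) t))
        exact L.integral_comp_comm hi
      · simp [G, hv0 x hx t]
    have htot := (hQd.const_mul (1 / 4)).add (hTd.const_mul (1 / 2))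
    rw [hQval, hGval, integral_const_mul] at htot
    have hE : pdTotalEnergy Ω Ωτ ρ C u = fun s => (1 / 4) * (∫ p, Q p s ∂(μ.prod μ))
        + (1 / 2) * ∫ x, ρ * (∑ i, (deriv (u x) s i) ^ 2) ∂μ := by
      funext s
      rw [congrFun hfub s]
      rfl
    rw [hE]
    exact htot.congr_deriv (by ring)
  exact is_const_of_deriv_eq_zero (fun t => (key t).differentiableAt) (fun t => (key t).deriv)
end
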